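/- arXiv:1710.06323 — 3 statements merged into one kernel-verified Lean document; each statement's English description precedes it below -/
import Mathlib

section
/- Let q be a prime power, p a monic irreducible polynomial of degree k over F_q, P its companion matrix, and α the residue class of x in the field K = F_q[x]/(p). Let 0 ≤ r < k and let S ∈ F_q^{(k−r)×k} be a matrix of full rank k−r. Then the image of the set {S·A : A ∈ F_q[P^T]} under the row-wise map ψ̄ equals the set of K-scalar multiples of the vector w ∈ K^{k−r} with entries w_j = Σ_{i=0}^{k−1} S_{j,i} α^i; that is, ψ̄(S·F_q[P^T]) = { c·w : c ∈ K }. (This is the Gabidulin code in K^{k−r} with generator matrix G·S^T, where G = (1 α … α^{k−1}).) -/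
/-! The vector `g = (1, α, …, α^{k-1})ᵀ` is an eigenvector of `Pᵀ` with eigenvalue `α`: the first
`k - 1` coordinates are shifts and the last one is the relation `p(α) = 0`. Hence every
`A = Σ vᵢ (Pᵀ)ⁱ` satisfies `A g = c g` with `c = Σ vᵢ αⁱ`, so that `ψ̄(S A) = S A g = c S g = c w`.
As `v` runs over `F^k`, the scalar `c` runs over all of `K`, since the powers `αⁱ` with `i < k` form
a basis. -/

open Matrix Polynomial

noncomputable section

/-- The companion matrix of a (monic) polynomial `p` of degree `k`:
entries `P (j+1) j = 1` on the subdiagonal, last column `(-p₀, …, -p_{k-1})ᵀ`. -/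
def companionMatrix {F : Type*} [Field F] {k : ℕ} (p : Polynomial F) :
    Matrix (Fin k) (Fin k) F :=
  Matrix.of fun i j =>
    if (j : ℕ) = k - 1 then -p.coeff (i : ℕ)
    else if (i : ℕ) = (j : ℕ) + 1 then 1 else 0

/-- `F_q[P] = { Σ_{i<k} vᵢ Pⁱ : vᵢ ∈ F_q }`. -/
def matAlg {F : Type*} [Field F] {k : ℕ} (P : Matrix (Fin k) (Fin k) F) :
    Set (Matrix (Fin k) (Fin k) F) :=
  { A | ∃ v : Fin k → F, A = ∑ i : Fin k, v i • P ^ (i : ℕ) }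

/-- The row space of a matrix: the span of its rows. -/
def rowSpace {F : Type*} [Field F] {ι n : Type*} (M : Matrix ι n F) :
    Submodule F (n → F) :=
  Submodule.span F (Set.range fun i => M i)

/-- `U` is a (reduced row echelon form) basis matrix of a codeword of the
Desarguesian spread `S_q(m,k,P)`, i.e. `U = (0 | … | 0 | I_k | B_{i+1} | … | B_m)`
with all blocks `B_j ∈ F_q[P]`. -/
def IsSpreadMat {F : Type*} [Field F] {k m : ℕ} (P : Matrix (Fin k) (Fin k) F)
    (U : Matrix (Fin k) (Fin m × Fin k) F) : Prop :=
  ∃ i : Fin m, ∃ B : Fin m → Matrix (Fin k) (Fin k) F,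
    (∀ j, j < i → B j = 0) ∧ B i = 1 ∧ (∀ j, i < j → B j ∈ matAlg P) ∧
    U = Matrix.of fun r jc => B jc.1 r jc.2

/-- The Desarguesian spread `S_q(m,k,P)` as a set of subspaces of `F^{mk}`. -/
def desSpread {F : Type*} [Field F] {k m : ℕ} (P : Matrix (Fin k) (Fin k) F) :
    Set (Submodule F (Fin m × Fin k → F)) :=
  { W | ∃ U : Matrix (Fin k) (Fin m × Fin k) F, IsSpreadMat P U ∧ W = rowSpace U }

/-- The relation `p(α) = 0`, solved for the leading power. -/
lemma root_pow_eq_neg_sum {F : Type*} [Field F] {k : ℕ} (p : Polynomial F) (hmonic : p.Monic)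
    (hdeg : p.natDegree = k) :
    AdjoinRoot.root p ^ k =
      ∑ j : Fin k, algebraMap F (AdjoinRoot p) (-p.coeff j) * AdjoinRoot.root p ^ (j : ℕ) := by
  have h : Polynomial.aeval (AdjoinRoot.root p) p = 0 := by
    rw [AdjoinRoot.aeval_eq, AdjoinRoot.mk_self]
  rw [Polynomial.aeval_eq_sum_range, hdeg, Finset.sum_range_succ, ← hdeg,
    hmonic.coeff_natDegree, one_smul, hdeg, Finset.sum_range] at h
  rw [eq_neg_of_add_eq_zero_right h, ← Finset.sum_neg_distrib]
  refine Finset.sum_congr rfl fun j _ => ?_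
  rw [map_neg, neg_mul, Algebra.smul_def]

/-- `(1, α, …, α^{k-1})ᵀ` is an eigenvector of `Pᵀ` with eigenvalue `α`. -/
lemma companion_transpose_mulVec {F : Type*} [Field F] {k : ℕ} (p : Polynomial F)
    (hmonic : p.Monic) (hdeg : p.natDegree = k) :
    ((companionMatrix (k := k) p)ᵀ.map (algebraMap F (AdjoinRoot p))) *ᵥ
        (fun i : Fin k => AdjoinRoot.root p ^ (i : ℕ)) =
      AdjoinRoot.root p • (fun i : Fin k => AdjoinRoot.root p ^ (i : ℕ)) := by
  funext i
  simp only [Matrix.mulVec, dotProduct, Matrix.map_apply, Matrix.transpose_apply, companionMatrix,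
    Matrix.of_apply, Pi.smul_apply, smul_eq_mul, ← pow_succ']
  by_cases hi : (i : ℕ) = k - 1
  · have hk : (i : ℕ) + 1 = k := by omega
    simp only [hi, if_true]
    rw [← hi, hk, root_pow_eq_neg_sum p hmonic hdeg]
  · have hk : (i : ℕ) + 1 < k := by omega
    rw [Finset.sum_eq_single (⟨i + 1, hk⟩ : Fin k)]
    · simp [hi]
    · intro j _ hj
      have hne : (j : ℕ) ≠ i + 1 := fun h => hj (Fin.ext h)
      simp [hi, hne]
    · simp

/-- An eigenvector of `M` is an eigenvector of every polynomial expression in `M`. -/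
lemma sum_smul_pow_mulVec {F K : Type*} [Field F] [CommRing K] [Algebra F K] {k : ℕ}
    (M : Matrix (Fin k) (Fin k) F) (a : K) (g : Fin k → K)
    (h : (M.map (algebraMap F K)) *ᵥ g = a • g) (v : Fin k → F) :
    ((∑ i : Fin k, v i • M ^ (i : ℕ)).map (algebraMap F K)) *ᵥ g =
      (∑ i : Fin k, algebraMap F K (v i) * a ^ (i : ℕ)) • g := by
  have hpow : ∀ n : ℕ, ((M ^ n).map (algebraMap F K)) *ᵥ g = a ^ n • g := by
    intro n
    induction n with
    | zero => simp
    | succ n ih =>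
      rw [pow_succ, Matrix.map_mul, ← Matrix.mulVec_mulVec, h, Matrix.mulVec_smul, ih,
        smul_smul, pow_succ']
  have hmap : (∑ i : Fin k, v i • M ^ (i : ℕ)).map (algebraMap F K) =
      ∑ i : Fin k, algebraMap F K (v i) • (M ^ (i : ℕ)).map (algebraMap F K) := by
    ext x y
    simp [Matrix.sum_apply]
    simp [Algebra.smul_def]
  rw [hmap, Matrix.sum_mulVec, Finset.sum_smul]
  refine Finset.sum_congr rfl fun i _ => ?_
  rw [Matrix.smul_mulVec, hpow, smul_smul]

lemma exists_eq_sum_root_pow {F : Type*} [Field F] {k : ℕ} (p : Polynomial F) (hmonic : p.Monic)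
    (hdeg : p.natDegree = k) (c : AdjoinRoot p) :
    ∃ v : Fin k → F,
      c = ∑ i : Fin k, algebraMap F (AdjoinRoot p) (v i) * AdjoinRoot.root p ^ (i : ℕ) := by
  subst hdeg
  refine ⟨(AdjoinRoot.powerBasisAux' hmonic).repr c, ?_⟩
  conv_lhs => rw [← (AdjoinRoot.powerBasisAux' hmonic).sum_repr c]
  refine Finset.sum_congr rfl fun i _ => ?_
  rw [Algebra.smul_def]
  congr 1
  exact (AdjoinRoot.powerBasis' hmonic).basis_eq_pow i

/-- With `K = F_q[x]/(p)`, `α` the class of `x`, `ψ̄` the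
row-wise map, and `S ∈ F_q^{(k-r)×k}` of full rank `k-r` (with `0 ≤ r < k`),
the image of `{S·A : A ∈ F_q[Pᵀ]}` under `ψ̄` is the set of `K`-scalar multiples
of the vector `w` with `w_j = Σ_i S_{j,i} αⁱ`, i.e. the Gabidulin code in
`K^{k-r}` with generator matrix `G·Sᵀ` where `G = (1 α … α^{k-1})`. -/
theorem matAlg_row_restricted_is_gabidulin (F : Type*) [Field F] (k r : ℕ)
    (hr : r < k) (p : Polynomial F) (hmonic : p.Monic) (hirr : Irreducible p)
    (hdeg : p.natDegree = k)
    (S : Matrix (Fin (k - r)) (Fin k) F) (hS : S.rank = k - r) :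
    (fun A : Matrix (Fin k) (Fin k) F => fun j : Fin (k - r) =>
        ∑ i : Fin k, algebraMap F (AdjoinRoot p) ((S * A) j i) * AdjoinRoot.root p ^ (i : ℕ)) ''
      matAlg (companionMatrix (k := k) p)ᵀ =
    Set.range (fun c : AdjoinRoot p => fun j : Fin (k - r) =>
      c * ∑ i : Fin k, algebraMap F (AdjoinRoot p) (S j i) * AdjoinRoot.root p ^ (i : ℕ)) := by
  have key : ∀ v : Fin k → F, (fun j : Fin (k - r) =>
        ∑ i : Fin k, algebraMap F (AdjoinRoot p)
          ((S * (∑ i : Fin k, v i • (companionMatrix (k := k) p)ᵀ ^ (i : ℕ) :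
            Matrix (Fin k) (Fin k) F) : Matrix (Fin (k - r)) (Fin k) F) j i) *
            AdjoinRoot.root p ^ (i : ℕ)) =
      fun j => (∑ i : Fin k, algebraMap F (AdjoinRoot p) (v i) * AdjoinRoot.root p ^ (i : ℕ)) *
        ∑ i : Fin k, algebraMap F (AdjoinRoot p) (S j i) * AdjoinRoot.root p ^ (i : ℕ) := by
    intro v
    -- The left side is `(S A) g` written out in coordinates, the right side is `c • S g`.
    change ((S * (∑ i : Fin k, v i • (companionMatrix (k := k) p)ᵀ ^ (i : ℕ) :
          Matrix (Fin k) (Fin k) F) : Matrix (Fin (k - r)) (Fin k) F).map (algebraMap F (AdjoinRoot p))) *ᵥ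
        (fun i : Fin k => AdjoinRoot.root p ^ (i : ℕ)) =
      (_ : AdjoinRoot p) • ((S.map (algebraMap F (AdjoinRoot p))) *ᵥ
        (fun i : Fin k => AdjoinRoot.root p ^ (i : ℕ)))
    rw [Matrix.map_mul, ← Matrix.mulVec_mulVec,
      sum_smul_pow_mulVec _ _ _ (companion_transpose_mulVec p hmonic hdeg), Matrix.mulVec_smul]
  ext w
  constructor
  · rintro ⟨A, ⟨v, rfl⟩, rfl⟩
    exact ⟨_, (key v).symm⟩
  · rintro ⟨c, rfl⟩
    obtain ⟨v, rfl⟩ := exists_eq_sum_root_pow p hmonic hdeg c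
    exact ⟨_, ⟨v, rfl⟩, key v⟩

end
end

section
/- Let q be a prime power, p a monic irreducible polynomial of degree k ≥ 1 over F_q with companion matrix P, and m ≥ 2, n = mk. Then there exist basis matrices U, V of two distinct codewords of the Desarguesian spread S_q(m,k,P) (i.e., rowsp(U) ≠ rowsp(V)), matrices A, A' ∈ GL_k(F_q), and a set S ⊆ {1,…,n} of exactly k column indices such that AU and A'V agree in every column outside S. (That is, there exist erasure patterns with k erased columns that cannot be corrected by the spread code in the column erasure channel.) -/
/-!
The codewords with basis matrices `U = (I | 0 | 0 | … | 0)` and `V = (I | I | 0 | … | 0)` differ only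
in the `k` columns of the second block, so erasing exactly that block makes them agree, with
`A = A' = 1`. Their row spaces differ because every vector in the row space of `U` vanishes on the
second block, whereas the rows of `V` do not. Both blocks `0` and `I = P ^ 0` lie in `F[P]`
(the latter needs `k ≥ 1`).
-/

open Matrix Polynomial

noncomputable section

lemma zero_mem_matAlg {F : Type*} [Field F] {k : ℕ} (P : Matrix (Fin k) (Fin k) F) :
    0 ∈ matAlg P :=
  ⟨0, by simp⟩

lemma one_mem_matAlg {F : Type*} [Field F] {k : ℕ} (hk : 1 ≤ k) (P : Matrix (Fin k) (Fin k) F) :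
    1 ∈ matAlg P := by
  refine ⟨Pi.single ⟨0, hk⟩ 1, ?_⟩
  rw [Finset.sum_eq_single ⟨0, hk⟩]
  · simp
  · intro b _ hb
    simp [Pi.single_eq_of_ne hb]
  · simp

/-- A column that is zero in `M` is zero in every vector of the row space of `M`. -/
lemma apply_eq_zero_of_mem_rowSpace {F : Type*} [Field F] {ι n : Type*} {M : Matrix ι n F} {c : n}
    (hc : ∀ i, M i c = 0) {x : n → F} (hx : x ∈ rowSpace M) : x c = 0 := by
  have hle : rowSpace M ≤ LinearMap.ker (LinearMap.proj c : (n → F) →ₗ[F] F) := by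
    refine Submodule.span_le.2 ?_
    rintro _ ⟨i, rfl⟩
    simpa using hc i
  simpa using hle hx

/-- For `m ≥ 2` there exist erasure patterns with exactly `k`
erased columns that the Desarguesian spread `S_q(m,k,P)` cannot correct in the
column erasure channel: there are basis matrices `U, V` of distinct codewords,
invertible matrices `A, A'`, and a set `S` of exactly `k` columns such that
`A·U` and `A'·V` agree in every column outside `S`. -/
theorem desSpread_CEC_k_erasures_not_correctable (F : Type*) [Field F]
    (k m : ℕ) (hk : 1 ≤ k) (hm : 2 ≤ m)
    (p : Polynomial F) (hmonic : p.Monic) (hirr : Irreducible p)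
    (hdeg : p.natDegree = k) :
    ∃ U V : Matrix (Fin k) (Fin m × Fin k) F,
      IsSpreadMat (companionMatrix (k := k) p) U ∧
      IsSpreadMat (companionMatrix (k := k) p) V ∧
      rowSpace U ≠ rowSpace V ∧
      ∃ A A' : Matrix (Fin k) (Fin k) F, IsUnit A ∧ IsUnit A' ∧
        ∃ S : Finset (Fin m × Fin k), S.card = k ∧
          ∀ col ∉ S, ∀ row : Fin k, (A * U) row col = (A' * V) row col := by
  let i₀ : Fin m := ⟨0, by omega⟩
  let i₁ : Fin m := ⟨1, by omega⟩
  have h_ne : i₁ ≠ i₀ := by simp [i₀, i₁]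
  have h_bot : ∀ j : Fin m, ¬ j < i₀ := fun j => by simp [i₀, Fin.lt_def]
  let B : Fin m → Matrix (Fin k) (Fin k) F := fun j => if j = i₀ then 1 else 0
  let C : Fin m → Matrix (Fin k) (Fin k) F := fun j => if j = i₀ ∨ j = i₁ then 1 else 0
  refine ⟨Matrix.of fun r jc => B jc.1 r jc.2, Matrix.of fun r jc => C jc.1 r jc.2,
    ⟨i₀, B, fun j hj => absurd hj (h_bot j), by simp [B], ?_, rfl⟩,
    ⟨i₀, C, fun j hj => absurd hj (h_bot j), by simp [C], ?_, rfl⟩, ?_,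
    1, 1, isUnit_one, isUnit_one, {i₁} ×ˢ Finset.univ, by simp, ?_⟩
  · intro j _
    by_cases h : j = i₀
    · simpa [B, h] using one_mem_matAlg hk _
    · simpa [B, h] using zero_mem_matAlg _
  · intro j _
    by_cases h : j = i₀ ∨ j = i₁
    · simpa only [C, if_pos h] using one_mem_matAlg hk _
    · simpa only [C, if_neg h] using zero_mem_matAlg _
  · intro h
    have h_mem : (Matrix.of fun r (jc : Fin m × Fin k) => C jc.1 r jc.2) ⟨0, hk⟩ ∈
        rowSpace (Matrix.of fun r (jc : Fin m × Fin k) => B jc.1 r jc.2) :=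
      h ▸ Submodule.subset_span ⟨_, rfl⟩
    have h_zero := apply_eq_zero_of_mem_rowSpace (c := (i₁, ⟨0, hk⟩))
      (fun i => by simp [B, h_ne]) h_mem
    simp [C] at h_zero
  · rintro ⟨j, c⟩ hj row
    have hj₁ : j ≠ i₁ := by simpa [eq_comm] using hj
    simp [B, C, hj₁]

end
end

section
/- Let q be a prime power, p a monic irreducible polynomial of degree k over F_q with companion matrix P, m ≥ 1 and n = mk. Let U, V ∈ F_q^{k×n} be basis matrices of codewords of the Desarguesian spread S_q(m,k,P) (block form with blocks in F_q[P]). Let A, A' ∈ GL_k(F_q) and let S ⊆ {1,…,n} be a set of column indices such that for every block j ∈ {1,…,m} at most k−1 of the k columns of block j lie in S, and such that there exists a block j_0 with no column of block j_0 in S and with the j_0-th block of U nonzero. If AU and A'V agree in every column outside S, then rowsp(U) = rowsp(V). (That is, any column erasure pattern with at most k−1 erased columns per block that leaves one nonzero block of the sent codeword unaffected can be uniquely decoded.) -/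
/-!
The matrices in `F[P]` form a field: `p(P) = 0`, so a polynomial `f` is either divisible by the
irreducible `p`, whence `f(P) = 0`, or coprime to it, whence `f(P)` has an inverse in `F[P]` by
Bézout. Comparing the erasure-free nonzero block gives `A U_{j₀} = A' V_{j₀}` with `U_{j₀}`
invertible, so `D = A'⁻¹ A = V_{j₀} U_{j₀}⁻¹` itself lies in `F[P]`. Each block of `D U - V` is then
an element of `F[P]` with a zero column, namely any column that is not erased; not being
invertible, it vanishes. Hence `V = D U` with `D` invertible, and the row spaces agree.
-/

open Matrix Polynomial

noncomputable section

lemma companionMatrix_pow_mulVec {F : Type*} [Field F] {k : ℕ} (hk : 0 < k) (p : Polynomial F)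
    (i : ℕ) (hi : i < k) :
    ((companionMatrix (k := k) p) ^ i) *ᵥ (Pi.single ⟨0, hk⟩ 1) = Pi.single ⟨i, hi⟩ 1 := by
  induction i with
  | zero =>
    rw [pow_zero, one_mulVec]
  | succ i ih =>
    rw [pow_succ', ← mulVec_mulVec, ih (by omega), mulVec_single_one]
    ext r
    have h : i ≠ k - 1 := by omega
    simp [companionMatrix, h, Pi.single_apply, Fin.ext_iff]

/-- The polynomial annihilates its companion matrix `P`: `p(P)` kills the cyclic vector `e₀`, and
it commutes with the powers of `P`, which carry `e₀` to every basis vector. -/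
lemma aeval_companionMatrix {F : Type*} [Field F] {k : ℕ} (hk : 0 < k) (p : Polynomial F)
    (hmonic : p.Monic) (hdeg : p.natDegree = k) :
    aeval (companionMatrix (k := k) p) p = 0 := by
  set P := companionMatrix (k := k) p with hP
  have hcyc : (aeval P p) *ᵥ (Pi.single ⟨0, hk⟩ 1) = 0 := by
    have hlast : (P ^ k) *ᵥ (Pi.single ⟨0, hk⟩ 1) = fun r : Fin k => -p.coeff r := by
      obtain ⟨l, rfl⟩ : ∃ l, k = l + 1 := ⟨k - 1, by omega⟩
      rw [pow_succ', ← mulVec_mulVec, hP, companionMatrix_pow_mulVec hk p l (by omega),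
        mulVec_single_one]
      ext r
      simp [companionMatrix]
    rw [aeval_eq_sum_range, hdeg, Finset.sum_range_succ, add_mulVec, smul_mulVec, hlast,
      Finset.sum_range, sum_mulVec]
    have hc : p.coeff k = 1 := by rw [← hdeg]; exact hmonic
    have hs : ∀ i : Fin k, (p.coeff i • P ^ (i : ℕ)) *ᵥ (Pi.single ⟨0, hk⟩ 1)
        = p.coeff i • (Pi.single i 1 : Fin k → F) := fun i => by
      rw [smul_mulVec, hP, companionMatrix_pow_mulVec hk p i i.2]
    simp only [hs, hc]
    ext r
    simp [Pi.single_apply]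
  ext r c
  have h : (aeval P p) *ᵥ (Pi.single c 1) = 0 := by
    have hcomm : aeval P p * P ^ (c : ℕ) = P ^ (c : ℕ) * aeval P p := by
      have := congrArg (aeval P) (mul_comm p (X ^ (c : ℕ)))
      simpa using this
    have h' := companionMatrix_pow_mulVec hk p c c.2
    rw [← hP] at h'
    rw [← h', mulVec_mulVec, hcomm, ← mulVec_mulVec, hcyc, mulVec_zero]
  rw [mulVec_single_one] at h
  exact congrFun h r

/-- Nonzero elements of `F[P]` are invertible within `F[P]`. -/
lemma exists_left_inv_of_ne_zero {F : Type*} [Field F] {k : ℕ} {p : Polynomial F}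
    (hirr : Irreducible p) {P : Matrix (Fin k) (Fin k) F} (hP : aeval P p = 0)
    {M : Matrix (Fin k) (Fin k) F} (hM : M ∈ (aeval (R := F) P).range) (h0 : M ≠ 0) :
    ∃ N ∈ (aeval (R := F) P).range, N * M = 1 := by
  obtain ⟨f, rfl⟩ := hM
  have hnd : ¬ p ∣ f := by
    rintro ⟨g, rfl⟩
    exact h0 (by simp [hP])
  obtain ⟨a, b, hab⟩ := (hirr.coprime_iff_not_dvd).2 hnd
  refine ⟨aeval P b, ⟨b, rfl⟩, ?_⟩
  have := congrArg (aeval P) hab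
  simpa [hP] using this

lemma matAlg_subset_range {F : Type*} [Field F] {k : ℕ} {P M : Matrix (Fin k) (Fin k) F}
    (hM : M ∈ matAlg P) : M ∈ (aeval (R := F) P).range := by
  obtain ⟨v, rfl⟩ := hM
  exact ⟨∑ i : Fin k, v i • X ^ (i : ℕ), by simp⟩

lemma IsSpreadMat.block_mem {F : Type*} [Field F] {k m : ℕ} {P : Matrix (Fin k) (Fin k) F}
    {U : Matrix (Fin k) (Fin m × Fin k) F} (hU : IsSpreadMat P U) (j : Fin m) :
    U.submatrix id (Prod.mk j) ∈ (aeval (R := F) P).range := by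
  obtain ⟨i, B, h0, h1, h2, rfl⟩ := hU
  change B j ∈ _
  rcases lt_trichotomy j i with h | rfl | h
  · rw [h0 j h]; exact zero_mem _
  · rw [h1]; exact one_mem _
  · exact matAlg_subset_range (h2 j h)

lemma rowSpace_mul_le {F : Type*} [Field F] {k : ℕ} {n : Type*} (D : Matrix (Fin k) (Fin k) F)
    (U : Matrix (Fin k) n F) : rowSpace (D * U) ≤ rowSpace U := by
  refine Submodule.span_le.2 ?_
  rintro _ ⟨i, rfl⟩
  have : (D * U) i = ∑ l, D i l • U l := by
    ext c
    simp [Matrix.mul_apply]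
  change (D * U) i ∈ rowSpace U
  rw [this]
  exact Submodule.sum_mem _ fun l _ => Submodule.smul_mem _ _ (Submodule.subset_span ⟨l, rfl⟩)

/-- In the column erasure channel, the Desarguesian spread
`S_q(m,k,P)` corrects any erasure pattern with at most `k-1` erased columns per
`k×k` block, provided some nonzero block of the sent codeword matrix `U` is
unaffected by erasures: if `A·U` and `A'·V` agree in every column outside `S`,
then `rowsp(U) = rowsp(V)`. -/
theorem desSpread_CEC_blockwise_correction (F : Type*) [Field F] (k m : ℕ)
    (hm : 1 ≤ m)
    (p : Polynomial F) (hmonic : p.Monic) (hirr : Irreducible p)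
    (hdeg : p.natDegree = k)
    (U V : Matrix (Fin k) (Fin m × Fin k) F)
    (hU : IsSpreadMat (companionMatrix (k := k) p) U)
    (hV : IsSpreadMat (companionMatrix (k := k) p) V)
    (A A' : Matrix (Fin k) (Fin k) F) (hA : IsUnit A) (hA' : IsUnit A')
    (S : Finset (Fin m × Fin k))
    (hSblocks : ∀ j : Fin m, (S.filter fun col => col.1 = j).card ≤ k - 1)
    (hfree : ∃ j₀ : Fin m, (∀ c : Fin k, (j₀, c) ∉ S) ∧ ∃ r c : Fin k, U r (j₀, c) ≠ 0)
    (hagree : ∀ col ∉ S, ∀ row : Fin k, (A * U) row col = (A' * V) row col) :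
    rowSpace U = rowSpace V := by
  have hk : 0 < k := hdeg ▸ hirr.natDegree_pos
  have hP := aeval_companionMatrix hk p hmonic hdeg
  set P := companionMatrix (k := k) p
  obtain ⟨j₀, hj₀, r₀, c₀, hne⟩ := hfree
  obtain ⟨a, rfl⟩ := hA
  obtain ⟨a', rfl⟩ := hA'
  set D : Matrix (Fin k) (Fin k) F := ↑(a'⁻¹ * a) with hD
  have hagree' : ∀ col ∉ S, ∀ row, (D * U) row col = V row col := by
    intro col hcol row
    have h1 : D * U = (↑a'⁻¹ : Matrix (Fin k) (Fin k) F) * ((↑a : Matrix (Fin k) (Fin k) F) * U) := by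
      rw [hD, Units.val_mul, Matrix.mul_assoc]
    have h2 : V = (↑a'⁻¹ : Matrix (Fin k) (Fin k) F) * ((↑a' : Matrix (Fin k) (Fin k) F) * V) := by
      rw [← Matrix.mul_assoc, Units.inv_mul, Matrix.one_mul]
    rw [h1, h2, Matrix.mul_apply, Matrix.mul_apply]
    exact Finset.sum_congr rfl fun l _ => by rw [hagree col hcol l]
  have hDmem : D ∈ (aeval (R := F) P).range := by
    obtain ⟨N, hN, hNU⟩ := exists_left_inv_of_ne_zero hirr hP (hU.block_mem j₀)
      (fun h => hne (congrFun (congrFun h r₀) c₀))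
    have hblock : D * U.submatrix id (Prod.mk j₀) = V.submatrix id (Prod.mk j₀) := by
      ext r c
      exact hagree' (j₀, c) (hj₀ c) r
    have : D = V.submatrix id (Prod.mk j₀) * N := by
      rw [← hblock, Matrix.mul_assoc, mul_eq_one_comm.1 hNU, Matrix.mul_one]
    rw [this]
    exact mul_mem (hV.block_mem j₀) hN
  have hVeq : D * U = V := by
    ext r ⟨j, c⟩
    obtain ⟨c₁, hc₁⟩ : ∃ c₁ : Fin k, (j, c₁) ∉ S := by
      by_contra! hall
      have hsub : Finset.univ.image (Prod.mk j) ⊆ S.filter fun col => col.1 = j := by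
        intro x hx
        obtain ⟨c, -, rfl⟩ := Finset.mem_image.1 hx
        exact Finset.mem_filter.2 ⟨hall c, rfl⟩
      have hcard := Finset.card_le_card hsub
      rw [Finset.card_image_of_injective _ (Prod.mk_right_injective j), Finset.card_univ,
        Fintype.card_fin] at hcard
      have := hSblocks j
      omega
    set E := D * U.submatrix id (Prod.mk j) - V.submatrix id (Prod.mk j) with hE
    have hEmem : E ∈ (aeval (R := F) P).range :=
      sub_mem (mul_mem hDmem (hU.block_mem j)) (hV.block_mem j)
    have hcol : ∀ l, E l c₁ = 0 := fun l => sub_eq_zero.2 (hagree' (j, c₁) hc₁ l)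
    have hE0 : E = 0 := by
      by_contra h
      obtain ⟨N, -, hN⟩ := exists_left_inv_of_ne_zero hirr hP hEmem h
      have := congrFun (congrFun hN c₁) c₁
      simp [Matrix.mul_apply, hcol] at this
    exact sub_eq_zero.1 (congrFun (congrFun hE0 r) c)
  apply le_antisymm
  · have hUeq : U = (↑(a'⁻¹ * a)⁻¹ : Matrix (Fin k) (Fin k) F) * V := by
      rw [← hVeq, ← Matrix.mul_assoc, hD, Units.inv_mul, Matrix.one_mul]
    rw [hUeq]
    exact rowSpace_mul_le _ _
  · rw [← hVeq]
    exact rowSpace_mul_le _ _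

end
end
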